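/- Let g : ℝⁿ → Matrix (Fin n) (Fin n) ℝ be a smooth map, written g_{μν}(x), with g_{μν} = g_{νμ}, g(x) positive definite for every x, and satisfying the normal-coordinates condition ∑_μ x^μ g_{μν}(x) = x^ν for all x, ν. Then there exists exactly one smooth map e : ℝⁿ → Matrix (Fin n) (Fin n) ℝ, written e^a_μ(x), with e(x) invertible for every x (inverse entries e_a^μ(x)), satisfying: (one) ∑_μ x^μ e^a_μ(x) = x^a; (two) ∑_a x^a e^a_μ(x) = x^μ; (three) ∑_μ e_a^μ(x) ( ∑_ν x^ν ∂_ν e^b_μ(x) + e^b_μ(x) ) symmetric under interchange of a and b; and g_{μν}(x) = ∑_a e^a_μ(x) e^a_ν(x) for all x, μ, ν. -/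

import Mathlib

/-- The partial derivative `∂_μ f` of a real-valued function on `ℝⁿ`. -/
noncomputable def pd {n : ℕ} (μ : Fin n) (f : (Fin n → ℝ) → ℝ) (x : Fin n → ℝ) : ℝ :=
  fderiv ℝ f x (Pi.single μ 1)


noncomputable section VielbeinAux

open Set Filter Topology

/-- The unit interval. -/
abbrev VI : Type := Icc (0:ℝ) 1

theorem contDiff_clm_comp {X Y Z : Type} [NormedAddCommGroup X] [NormedSpace ℝ X]
    [NormedAddCommGroup Y] [NormedSpace ℝ Y] [NormedAddCommGroup Z] [NormedSpace ℝ Z]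
    (L : Y →L[ℝ] Z) {f : X → Y} {n : WithTop ℕ∞} (hf : ContDiff ℝ n f) :
    ContDiff ℝ n (fun x => L (f x)) := L.contDiff.comp hf

theorem isUnit_one_sub_clm {Y : Type} [NormedAddCommGroup Y] [NormedSpace ℝ Y] [CompleteSpace Y]
    (T : Y →L[ℝ] Y) (k : ℕ) (hT : ‖T ^ k‖ < 1) : IsUnit (1 - T) := by
  have hu : IsUnit (1 - T ^ k) := isUnit_one_sub_of_norm_lt_one hT
  have hu2 := mul_neg_geom_sum T k
  have hc : Commute (1 - T) (∑ i ∈ Finset.range k, T ^ i) := by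
    rw [Commute, SemiconjBy, mul_neg_geom_sum, geom_sum_mul_neg]
  rw [← hu2] at hu
  exact (hc.isUnit_mul_iff.1 hu).1

theorem contDiffAt_inverse_clm {Y : Type} [NormedAddCommGroup Y] [NormedSpace ℝ Y]
    [CompleteSpace Y] (T : Y →L[ℝ] Y) (hT : IsUnit T) :
    ContDiffAt ℝ (⊤ : ℕ∞) (Ring.inverse : (Y →L[ℝ] Y) → (Y →L[ℝ] Y)) T := by
  obtain ⟨u, rfl⟩ := hT
  exact contDiffAt_ringInverse ℝ u

/-- Evaluate a curve of linear maps at a vector, as a continuous linear map. -/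
def swapCLM (X F : Type) [NormedAddCommGroup X] [NormedSpace ℝ X]
    [NormedAddCommGroup F] [NormedSpace ℝ F] :
    C(VI, X →L[ℝ] F) →L[ℝ] (X →L[ℝ] C(VI, F)) :=
  LinearMap.mkContinuous₂
    (LinearMap.mk₂ ℝ (fun (φ : C(VI, X →L[ℝ] F)) (v : X) =>
      (⟨fun s => φ s v, by fun_prop⟩ : C(VI, F)))
      (by intros; ext; simp) (by intros; ext; simp) (by intros; ext; simp) (by intros; ext; simp))
    1 (by
      intro φ v
      rw [ContinuousMap.norm_le _ (by positivity)]
      intro s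
      simp only [LinearMap.mk₂_apply, ContinuousMap.coe_mk, one_mul]
      exact (φ s).le_of_opNorm_le (φ.norm_coe_le_norm s) v)

theorem swapCLM_apply {X F : Type} [NormedAddCommGroup X] [NormedSpace ℝ X]
    [NormedAddCommGroup F] [NormedSpace ℝ F] (φ : C(VI, X →L[ℝ] F)) (v : X) (s : VI) :
    swapCLM X F φ v s = φ s v := rfl

/-- Currying of a continuous function. -/
def curryC {X F : Type} [NormedAddCommGroup X] [NormedAddCommGroup F]
    (B : ℝ × X → F) (hB : Continuous B) (x : X) : C(VI, F) :=
  ⟨fun s => B (s, x), by fun_prop⟩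

theorem continuous_curryC {X F : Type} [NormedAddCommGroup X] [NormedAddCommGroup F]
    (B : ℝ × X → F) (hB : Continuous B) : Continuous (curryC B hB) := by
  apply ContinuousMap.continuous_of_continuous_uncurry
  simp only [curryC, Function.uncurry_def, ContinuousMap.coe_mk]
  fun_prop

theorem hasFDerivAt_curryC {X F : Type} [NormedAddCommGroup X] [NormedSpace ℝ X]
    [NormedAddCommGroup F] [NormedSpace ℝ F]
    (B : ℝ × X → F) (hB : Continuous B) (B' : ℝ × X → X →L[ℝ] F) (hB' : Continuous B')
    (h : ∀ s x, HasFDerivAt (fun y => B (s, y)) (B' (s, x)) x) (x : X) :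
    HasFDerivAt (curryC B hB) (swapCLM X F (curryC B' hB' x)) x := by
  rw [hasFDerivAt_iff_isLittleO, Asymptotics.isLittleO_iff]
  intro ε hε
  have hc := (continuous_curryC B' hB').continuousAt (x := x)
  obtain ⟨δ, hδ, hd⟩ := Metric.continuousAt_iff.1 hc ε hε
  filter_upwards [Metric.ball_mem_nhds x hδ] with y hy
  rw [ContinuousMap.norm_le _ (by positivity)]
  intro s
  simp only [ContinuousMap.sub_apply, swapCLM_apply]
  refine (convex_ball x δ).norm_image_sub_le_of_norm_hasFDerivWithin_le'
    (f := fun y => B (s, y)) (f' := fun z => B' (s, z)) (φ := B' (s, x))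
    (fun z _ => (h s z).hasFDerivWithinAt) ?_ (Metric.mem_ball_self hδ) hy
  intro z hz
  have h1 := (hd hz).le
  rw [dist_eq_norm] at h1
  exact (ContinuousMap.norm_coe_le_norm (curryC B' hB' z - curryC B' hB' x) s).trans h1

theorem contDiff_nat_curryC {X : Type} [NormedAddCommGroup X] [NormedSpace ℝ X] (n : ℕ) :
    ∀ (F : Type) [NormedAddCommGroup F] [NormedSpace ℝ F]
    (B : ℝ × X → F) (hB : Continuous B), ContDiff ℝ n B → ContDiff ℝ n (curryC B hB) := by
  induction n with
  | zero =>
    intro F _ _ B hB _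
    exact contDiff_zero.2 (continuous_curryC B hB)
  | succ n ih =>
    intro F _ _ B hB h
    have h' : ContDiff ℝ n (fun p : ℝ × X => (fderiv ℝ B p).comp (ContinuousLinearMap.inr ℝ ℝ X)) :=
      (h.fderiv_right (m := n) (by norm_cast)).clm_comp contDiff_const
    have hd : Differentiable ℝ B := h.differentiable (by simp)
    push_cast
    rw [contDiff_succ_iff_hasFDerivAt]
    refine ⟨fun x => swapCLM X F (curryC _ h'.continuous x),
      contDiff_clm_comp (Z := X →L[ℝ] C(VI, F)) (swapCLM X F) (ih _ _ h'.continuous h'), fun x => ?_⟩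
    refine hasFDerivAt_curryC B hB _ h'.continuous (fun s x => ?_) x
    exact (hd (s, x)).hasFDerivAt.comp x (hasFDerivAt_prodMk_right s x)

theorem contDiff_curryC {X F : Type} [NormedAddCommGroup X] [NormedSpace ℝ X]
    [NormedAddCommGroup F] [NormedSpace ℝ F]
    (B : ℝ × X → F) (hB : ContDiff ℝ (⊤ : ℕ∞) B) :
    ContDiff ℝ (⊤ : ℕ∞) (curryC B hB.continuous) :=
  contDiff_infty.2 fun n => contDiff_nat_curryC n F B _ (contDiff_infty.1 hB n)

/-- Extension of a curve to the whole line. -/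
def extC {F : Type} [NormedAddCommGroup F] (φ : C(VI, F)) : ℝ → F :=
  IccExtend zero_le_one φ

theorem continuous_extC {F : Type} [NormedAddCommGroup F] (φ : C(VI, F)) :
    Continuous (extC φ) := φ.continuous.Icc_extend'

theorem extC_of_mem {F : Type} [NormedAddCommGroup F] (φ : C(VI, F)) {t : ℝ}
    (ht : t ∈ Icc (0:ℝ) 1) : extC φ t = φ ⟨t, ht⟩ := IccExtend_of_mem _ _ ht

/-- Primitive. -/
def primC {F : Type} [NormedAddCommGroup F] [NormedSpace ℝ F] [CompleteSpace F] :
    C(VI, F) →L[ℝ] C(VI, F) :=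
  LinearMap.mkContinuous
    { toFun := fun φ => ⟨fun t => ∫ s in (0:ℝ)..t, extC φ s,
        (intervalIntegral.continuous_primitive
          (fun a b => (continuous_extC φ).intervalIntegrable a b) 0).comp continuous_subtype_val⟩
      map_add' := by
        intro φ ψ
        ext t
        simp only [ContinuousMap.coe_mk, ContinuousMap.add_apply]
        rw [← intervalIntegral.integral_add ((continuous_extC φ).intervalIntegrable _ _)
          ((continuous_extC ψ).intervalIntegrable _ _)]
        rfl
      map_smul' := by
        intro c φ
        ext t
        simp only [ContinuousMap.coe_mk, ContinuousMap.smul_apply, RingHom.id_apply]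
        rw [← intervalIntegral.integral_smul]
        rfl }
    1 (by
      intro φ
      rw [ContinuousMap.norm_le _ (by positivity)]
      intro t
      have h := intervalIntegral.norm_integral_le_of_norm_le_const (a := 0) (b := (t:ℝ))
        (f := extC φ) (C := ‖φ‖) (fun s _ => φ.norm_coe_le_norm _)
      refine h.trans ?_
      rw [sub_zero, abs_of_nonneg t.2.1, mul_comm]
      exact mul_le_mul_of_nonneg_right t.2.2 (norm_nonneg _))

theorem primC_apply {F : Type} [NormedAddCommGroup F] [NormedSpace ℝ F] [CompleteSpace F]
    (φ : C(VI, F)) (t : VI) : primC φ t = ∫ s in (0:ℝ)..t, extC φ s := rfl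

/-- Volterra operator. -/
def volt {A : Type} [NormedRing A] [NormedAlgebra ℝ A] [CompleteSpace A] (b : C(VI, A)) :
    C(VI, A) →L[ℝ] C(VI, A) :=
  primC.comp ((ContinuousLinearMap.mul ℝ C(VI, A)).flip b)

theorem volt_apply {A : Type} [NormedRing A] [NormedAlgebra ℝ A] [CompleteSpace A]
    (b φ : C(VI, A)) (t : VI) : volt b φ t = ∫ s in (0:ℝ)..t, extC φ s * extC b s := rfl

theorem volt_pow_le {A : Type} [NormedRing A] [NormedAlgebra ℝ A] [CompleteSpace A]
    (b φ : C(VI, A)) (k : ℕ) : ∀ t : VI,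
    ‖(volt b ^ k) φ t‖ ≤ ‖b‖ ^ k * (t:ℝ) ^ k / k.factorial * ‖φ‖ := by
  induction k with
  | zero => intro t; simpa using φ.norm_coe_le_norm t
  | succ k ih =>
    intro t
    rw [pow_succ', mul_apply_eq_comp, volt_apply]
    have hi : ∫ s in (0:ℝ)..t, (‖b‖ ^ k * s ^ k / k.factorial * ‖φ‖ * ‖b‖) =
        ‖b‖ ^ (k+1) * (t:ℝ) ^ (k+1) / (k+1).factorial * ‖φ‖ := by
      have : ∀ s : ℝ, ‖b‖ ^ k * s ^ k / k.factorial * ‖φ‖ * ‖b‖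
          = (‖b‖ ^ (k+1) / k.factorial * ‖φ‖) * s ^ k := by intro s; ring
      simp only [this]
      rw [intervalIntegral.integral_const_mul, integral_pow, Nat.factorial_succ]
      push_cast
      field_simp
      simp
    rw [← hi]
    refine intervalIntegral.norm_integral_le_of_norm_le t.2.1 ?_ ?_
    · refine Eventually.of_forall fun s hs => ?_
      have hs' : s ∈ Icc (0:ℝ) 1 := ⟨hs.1.le, hs.2.trans t.2.2⟩
      rw [extC_of_mem _ hs', extC_of_mem _ hs']
      refine (norm_mul_le _ _).trans ?_
      have h1 := ih ⟨s, hs'⟩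
      have h2 := b.norm_coe_le_norm ⟨s, hs'⟩
      exact mul_le_mul h1 h2 (norm_nonneg _) ((norm_nonneg _).trans h1)
    · apply Continuous.intervalIntegrable
      fun_prop

theorem isUnit_one_sub_volt {A : Type} [NormedRing A] [NormedAlgebra ℝ A] [CompleteSpace A]
    (b : C(VI, A)) : IsUnit (1 - volt b) := by
  have ht := FloorSemiring.tendsto_pow_div_factorial_atTop ‖b‖
  obtain ⟨k, hk⟩ := (ht.eventually (gt_mem_nhds (zero_lt_one))).exists
  have hn : ‖volt b ^ k‖ < 1 := by
    refine lt_of_le_of_lt (ContinuousLinearMap.opNorm_le_bound _ (by positivity) fun φ => ?_) hk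
    rw [ContinuousMap.norm_le _ (by positivity)]
    intro t
    refine (volt_pow_le b φ k t).trans ?_
    refine mul_le_mul_of_nonneg_right ?_ (norm_nonneg _)
    refine div_le_div_of_nonneg_right ?_ (by positivity)
    exact mul_le_of_le_one_right (by positivity) (pow_le_one₀ t.2.1 t.2.2)
  exact isUnit_one_sub_clm _ k hn

theorem exists_radial_solution {X A : Type} [NormedAddCommGroup X] [NormedSpace ℝ X]
    [NormedRing A] [NormedAlgebra ℝ A] [CompleteSpace A]
    (ω : X → X →L[ℝ] A) (hω : ContDiff ℝ (⊤ : ℕ∞) ω) :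
    ∃ e : X → A, ContDiff ℝ (⊤ : ℕ∞) e ∧ e 0 = 1 ∧ ∀ x, fderiv ℝ e x x = e x * ω x x := by
  have hB : ContDiff ℝ (⊤ : ℕ∞) (fun p : ℝ × X => ω (p.1 • p.2) p.2) :=
    (hω.comp (contDiff_fst.smul contDiff_snd)).clm_apply contDiff_snd
  set β : X → C(VI, A) := curryC _ hB.continuous with hβ
  have hβs : ContDiff ℝ (⊤ : ℕ∞) β := contDiff_curryC _ hB
  have hβa : ∀ x (s : VI), β x s = ω ((s:ℝ) • x) x := fun x s => rfl
  set Φ : X → C(VI, A) := fun x => Ring.inverse (1 - volt (β x)) 1 with hΦ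
  have hΦs : ContDiff ℝ (⊤ : ℕ∞) Φ := by
    have h1 : ContDiff ℝ (⊤ : ℕ∞) (fun x => (1 : C(VI, A) →L[ℝ] C(VI, A)) - volt (β x)) := by
      refine contDiff_const.sub (contDiff_const.clm_comp ?_)
      exact contDiff_clm_comp (Z := C(VI, A) →L[ℝ] C(VI, A)) ((ContinuousLinearMap.mul ℝ C(VI, A)).flip) hβs
    refine ContDiff.clm_apply ?_ contDiff_const
    rw [contDiff_iff_contDiffAt]
    intro x
    exact (contDiffAt_inverse_clm _ (isUnit_one_sub_volt (β x))).comp x h1.contDiffAt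
  have hΦe : ∀ x, Φ x = 1 + volt (β x) (Φ x) := by
    intro x
    have h := Ring.mul_inverse_cancel _ (isUnit_one_sub_volt (β x))
    have h2 := congrArg (fun T : C(VI, A) →L[ℝ] C(VI, A) => T 1) h
    have h3 : Φ x - volt (β x) (Φ x) = 1 := h2
    rw [← h3]; abel
  have huniq : ∀ x ψ, ψ = 1 + volt (β x) ψ → ψ = Φ x := by
    intro x ψ hψ
    have h := Ring.inverse_mul_cancel _ (isUnit_one_sub_volt (β x))
    have h2 := congrArg (fun T : C(VI, A) →L[ℝ] C(VI, A) => T ψ) h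
    have h3 : Ring.inverse (1 - volt (β x)) (ψ - volt (β x) ψ) = ψ := h2
    rw [← h3, sub_eq_of_eq_add hψ]
  -- scaling
  have hscale : ∀ x (t : VI), Φ ((t:ℝ) • x) ⟨1, by simp⟩ = Φ x t := by
    intro x t
    have hm : ∀ s : VI, (t:ℝ) * s ∈ Icc (0:ℝ) 1 := fun s =>
      ⟨mul_nonneg t.2.1 s.2.1, mul_le_one₀ t.2.2 s.2.1 s.2.2⟩
    set ψ : C(VI, A) := ⟨fun s => Φ x ⟨t * s, hm s⟩, by fun_prop⟩ with hψ
    have h1 : ψ = Φ ((t:ℝ) • x) := by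
      apply huniq
      ext s
      have h2 := congrArg (fun T : C(VI, A) => T ⟨t * s, hm s⟩) (hΦe x)
      simp only [ContinuousMap.add_apply, ContinuousMap.one_apply, volt_apply] at h2 ⊢
      have h3 : ψ s = Φ x ⟨t * s, hm s⟩ := rfl
      rw [h3, h2]
      congr 1
      have h4 := intervalIntegral.smul_integral_comp_mul_left (a := 0) (b := (s:ℝ))
        (fun r => extC (Φ x) r * extC (β x) r) (t:ℝ)
      rw [mul_zero] at h4
      rw [← h4, ← intervalIntegral.integral_smul]
      refine intervalIntegral.integral_congr fun r hr => ?_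
      rw [uIcc_of_le s.2.1] at hr
      have hr' : r ∈ Icc (0:ℝ) 1 := ⟨hr.1, hr.2.trans s.2.2⟩
      have hr2 := hm ⟨r, hr'⟩
      rw [extC_of_mem _ hr', extC_of_mem _ hr', extC_of_mem _ hr2, extC_of_mem _ hr2, hβa, hβa]
      simp only [hψ, ContinuousMap.coe_mk, map_smul, smul_smul]
      rw [mul_smul_comm, mul_comm r]
    rw [← h1]
    simp [hψ]
  have hes : ContDiff ℝ (⊤ : ℕ∞) (fun x => Φ x ⟨1, by simp⟩) :=
    contDiff_clm_comp (ContinuousMap.evalCLM ℝ (⟨1, by simp⟩ : VI)) hΦs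
  refine ⟨fun x => Φ x ⟨1, by simp⟩, ?_, ?_, ?_⟩
  · exact hes
  · have h2 := congrArg (fun T : C(VI, A) => T ⟨0, by simp⟩) (hΦe 0)
    simp only [ContinuousMap.add_apply, ContinuousMap.one_apply, volt_apply,
      intervalIntegral.integral_same, add_zero] at h2
    rw [← h2, ← hscale 0 ⟨0, by simp⟩]
    simp
  · intro x
    have hd : HasDerivAt (fun t : ℝ => Φ (t • x) ⟨1, by simp⟩)
        (fderiv ℝ (fun x => Φ x ⟨1, by simp⟩) x x) 1 := by
      have h1 : HasDerivAt (fun t : ℝ => t • x) x 1 := by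
        simpa using (hasDerivAt_id (1:ℝ)).smul_const x
      have h2 : HasFDerivAt (fun x => Φ x ⟨1, by simp⟩)
        (fderiv ℝ (fun x => Φ x ⟨1, by simp⟩) x) ((1:ℝ) • x) := by
        rw [one_smul]
        exact (hes.differentiable (by simp) x).hasFDerivAt
      exact h2.comp_hasDerivAt (1:ℝ) h1
    have hc : Continuous (fun s => extC (Φ x) s * extC (β x) s) :=
      (continuous_extC _).mul (continuous_extC _)
    have hd2 : HasDerivAt (fun t : ℝ => 1 + ∫ s in (0:ℝ)..t, extC (Φ x) s * extC (β x) s)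
        (extC (Φ x) 1 * extC (β x) 1) 1 :=
      (intervalIntegral.integral_hasDerivAt_right (hc.intervalIntegrable _ _)
        (hc.stronglyMeasurableAtFilter _ _) hc.continuousAt).const_add 1
    have heq : ∀ t ∈ Icc (0:ℝ) 1, Φ (t • x) ⟨1, by simp⟩ =
        1 + ∫ s in (0:ℝ)..t, extC (Φ x) s * extC (β x) s := by
      intro t ht
      rw [hscale x ⟨t, ht⟩]
      exact congrArg (fun T : C(VI, A) => T ⟨t, ht⟩) (hΦe x)
    have h1m : (1:ℝ) ∈ Icc (0:ℝ) 1 := by simp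
    have hu : UniqueDiffWithinAt ℝ (Icc (0:ℝ) 1) 1 := uniqueDiffOn_Icc zero_lt_one 1 h1m
    have h3 := hu.eq_deriv _ hd.hasDerivWithinAt
      (hd2.hasDerivWithinAt.congr heq (heq 1 h1m))
    rw [h3, extC_of_mem _ h1m, extC_of_mem _ h1m, hβa, one_smul]

theorem exists_radial_solution_half {X A : Type} [NormedAddCommGroup X] [NormedSpace ℝ X]
    [NormedRing A] [NormedAlgebra ℝ A] [CompleteSpace A]
    (g h : X → A) (hg : ContDiff ℝ (⊤ : ℕ∞) g) (hh : ContDiff ℝ (⊤ : ℕ∞) h) :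
    ∃ e : X → A, ContDiff ℝ (⊤ : ℕ∞) e ∧ e 0 = 1 ∧
      ∀ x, fderiv ℝ e x x = e x * ((1/2 : ℝ) • (h x * fderiv ℝ g x x)) := by
  have c1 : ContDiff ℝ (⊤ : ℕ∞) (fun x => ContinuousLinearMap.mul ℝ A (h x)) :=
    (ContinuousLinearMap.mul ℝ A).contDiff.comp hh
  have c2 : ContDiff ℝ (⊤ : ℕ∞) (fderiv ℝ g) := hg.fderiv_right (m := (⊤ : ℕ∞)) (by simp)
  exact exists_radial_solution _ ((c1.clm_comp c2).const_smul (1/2 : ℝ))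

end VielbeinAux

section VielbeinMatrix

attribute [local instance] Matrix.linftyOpNormedRing Matrix.linftyOpNormedAlgebra

variable {n : ℕ}

/-- Matrix entry as a continuous linear map. -/
noncomputable def entryL (a b : Fin n) : Matrix (Fin n) (Fin n) ℝ →L[ℝ] ℝ :=
  LinearMap.toContinuousLinearMap (Matrix.entryLinearMap ℝ ℝ a b)

theorem entryL_apply (a b : Fin n) (m : Matrix (Fin n) (Fin n) ℝ) : entryL a b m = m a b := rfl

/-- Transpose as a continuous linear map. -/
noncomputable def transpL : Matrix (Fin n) (Fin n) ℝ →L[ℝ] Matrix (Fin n) (Fin n) ℝ :=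
  LinearMap.toContinuousLinearMap (Matrix.transposeLinearEquiv (Fin n) (Fin n) ℝ ℝ).toLinearMap

theorem transpL_apply (m : Matrix (Fin n) (Fin n) ℝ) : transpL m = m.transpose := rfl

theorem contDiff_of_entries (f : (Fin n → ℝ) → Matrix (Fin n) (Fin n) ℝ)
    (h : ∀ a b, ContDiff ℝ (⊤ : ℕ∞) fun x => f x a b) : ContDiff ℝ (⊤ : ℕ∞) f := by
  have : f = fun x => ∑ a, ∑ b, f x a b • Matrix.single a b (1:ℝ) := by
    funext x
    conv_lhs => rw [Matrix.matrix_eq_sum_single (f x)]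
    simp [Matrix.smul_single]
  rw [this]
  exact ContDiff.sum fun a _ => ContDiff.sum fun b _ => (h a b).smul contDiff_const

theorem hasFDerivAt_transp {f : (Fin n → ℝ) → Matrix (Fin n) (Fin n) ℝ} (hf : Differentiable ℝ f)
    (x : Fin n → ℝ) : fderiv ℝ (fun y => (f y).transpose) x x = (fderiv ℝ f x x).transpose := by
  have h := (transpL (n := n)).hasFDerivAt.comp x (hf x).hasFDerivAt
  have h2 : fderiv ℝ (fun y => (f y).transpose) x = transpL.comp (fderiv ℝ f x) := h.fderiv
  rw [h2]; rfl

theorem differentiable_transp {f : (Fin n → ℝ) → Matrix (Fin n) (Fin n) ℝ}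
    (hf : Differentiable ℝ f) : Differentiable ℝ (fun y => (f y).transpose) :=
  (transpL (n := n)).differentiable.comp hf

theorem fderiv_entry {f : (Fin n → ℝ) → Matrix (Fin n) (Fin n) ℝ} (hf : Differentiable ℝ f)
    (x v : Fin n → ℝ) (a b : Fin n) : fderiv ℝ (fun y => f y a b) x v = (fderiv ℝ f x v) a b := by
  have h := (entryL a b).hasFDerivAt.comp x (hf x).hasFDerivAt
  have h2 : fderiv ℝ (fun y => f y a b) x = (entryL a b).comp (fderiv ℝ f x) := h.fderiv
  rw [h2]; rfl

theorem sum_pd (f : (Fin n → ℝ) → ℝ) (x : Fin n → ℝ) :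
    ∑ ν, x ν * pd ν f x = fderiv ℝ f x x := by
  have hx : fderiv ℝ f x x = fderiv ℝ f x (∑ i, Pi.single i (x i)) := by
    rw [Finset.univ_sum_single x]
  rw [hx, map_sum]
  refine Finset.sum_congr rfl fun ν _ => ?_
  have : (Pi.single ν (x ν) : Fin n → ℝ) = x ν • Pi.single ν 1 := by
    rw [← Pi.single_smul]; simp
  rw [this, map_smul]; rfl

theorem fderiv_mulM {f h : (Fin n → ℝ) → Matrix (Fin n) (Fin n) ℝ} (hf : Differentiable ℝ f)
    (hh : Differentiable ℝ h) (x : Fin n → ℝ) :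
    fderiv ℝ (fun y => f y * h y) x x = f x * fderiv ℝ h x x + fderiv ℝ f x x * h x := by
  have h1 : HasFDerivAt (fun y => f y * h y) _ x := (hf x).hasFDerivAt.mul' (hh x).hasFDerivAt
  have h2 := h1.fderiv
  rw [h2]
  rfl

theorem contDiff_inv {f : (Fin n → ℝ) → Matrix (Fin n) (Fin n) ℝ}
    (hf : ContDiff ℝ (⊤ : ℕ∞) f) (hu : ∀ x, IsUnit (f x)) :
    ContDiff ℝ (⊤ : ℕ∞) (fun y => (f y)⁻¹) := by
  rw [contDiff_iff_contDiffAt]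
  intro x
  have h1 : ContDiffAt ℝ (⊤ : ℕ∞) (Ring.inverse (M₀ := Matrix (Fin n) (Fin n) ℝ)) (f x) := by
    obtain ⟨u, hu⟩ := hu x
    rw [← hu]
    exact contDiffAt_ringInverse ℝ u
  have h2 := h1.comp x hf.contDiffAt
  refine h2.congr_of_eventuallyEq (Filter.Eventually.of_forall fun y => ?_)
  simp [Matrix.nonsing_inv_eq_ringInverse]

theorem ray_const (f : ℝ → ℝ) (hf : Differentiable ℝ f) (h : ∀ t, 0 < t → deriv f t = 0) :
    f 1 = f 0 := by
  obtain ⟨c, hc, h1⟩ := exists_deriv_eq_slope f zero_lt_one hf.continuous.continuousOn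
    hf.differentiableOn
  rw [h c hc.1] at h1
  simp at h1
  linarith

theorem hasDerivAt_ray {f : (Fin n → ℝ) → Matrix (Fin n) (Fin n) ℝ} (hf : Differentiable ℝ f)
    (x : Fin n → ℝ) (t : ℝ) : HasDerivAt (fun s : ℝ => f (s • x)) (fderiv ℝ f (t • x) x) t := by
  have h1 : HasDerivAt (fun s : ℝ => s • x) x t := by
    simpa using (hasDerivAt_id t).smul_const x
  exact (hf (t • x)).hasFDerivAt.comp_hasDerivAt t h1

theorem radial_const {f : (Fin n → ℝ) → Matrix (Fin n) (Fin n) ℝ} (hf : Differentiable ℝ f)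
    (h : ∀ x, fderiv ℝ f x x = 0) (x : Fin n → ℝ) : f x = f 0 := by
  ext a b
  have h1 : ∀ t, HasDerivAt (fun s : ℝ => f (s • x) a b) ((fderiv ℝ f (t • x) x) a b) t :=
    fun t => (entryL a b).hasFDerivAt.comp_hasDerivAt t (hasDerivAt_ray hf x t)
  have h2 := ray_const (fun s : ℝ => f (s • x) a b) (fun t => (h1 t).differentiableAt) ?_
  · simpa using h2
  · intro t ht
    rw [(h1 t).deriv]
    have h3 := h (t • x)
    rw [map_smul] at h3
    have h4 := (smul_eq_zero.1 h3).resolve_left ht.ne'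
    rw [h4]; rfl

open Matrix in
/-- Matrix form of condition (three). -/
theorem three_iff {e : (Fin n → ℝ) → Matrix (Fin n) (Fin n) ℝ} (he : Differentiable ℝ e)
    (hu : ∀ x, IsUnit (e x)) (x : Fin n → ℝ) :
    (∀ a b, ∑ μ, (e x)⁻¹ μ a * ((∑ ν, x ν * pd ν (fun y => e y b μ) x) + e x b μ)
          = ∑ μ, (e x)⁻¹ μ b * ((∑ ν, x ν * pd ν (fun y => e y a μ) x) + e x a μ)) ↔
    (fderiv ℝ e x x * (e x)⁻¹)ᵀ = fderiv ℝ e x x * (e x)⁻¹ := by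
  have key : ∀ a b, ∑ μ, (e x)⁻¹ μ a * ((∑ ν, x ν * pd ν (fun y => e y b μ) x) + e x b μ)
      = (fderiv ℝ e x x * (e x)⁻¹) b a + (1 : Matrix (Fin n) (Fin n) ℝ) b a := by
    intro a b
    have h1 : e x * (e x)⁻¹ = 1 :=
      Matrix.mul_nonsing_inv _ ((Matrix.isUnit_iff_isUnit_det _).1 (hu x))
    rw [← h1, Matrix.mul_apply, Matrix.mul_apply, ← Finset.sum_add_distrib]
    refine Finset.sum_congr rfl fun μ _ => ?_
    rw [sum_pd, fderiv_entry he]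
    ring
  simp only [key]
  constructor
  · intro h
    ext a b
    have h2 := h a b
    by_cases hab : a = b
    · subst hab; rfl
    · rw [Matrix.one_apply_ne hab, Matrix.one_apply_ne (Ne.symm hab)] at h2
      simpa [Matrix.transpose_apply] using h2
  · intro h a b
    have h2 := congrFun (congrFun h a) b
    rw [Matrix.transpose_apply] at h2
    rw [h2]
    congr 1
    simp [Matrix.one_apply, eq_comm]

open Matrix in
theorem unique_core {e f : (Fin n → ℝ) → Matrix (Fin n) (Fin n) ℝ}
    (he : ContDiff ℝ (⊤ : ℕ∞) e) (hf : ContDiff ℝ (⊤ : ℕ∞) f)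
    (hue : ∀ x, IsUnit (e x)) (huf : ∀ x, IsUnit (f x))
    (h0 : e 0 = 1) (h0' : f 0 = 1)
    (hg : ∀ x, (e x)ᵀ * e x = (f x)ᵀ * f x)
    (he3 : ∀ x, (fderiv ℝ e x x * (e x)⁻¹)ᵀ = fderiv ℝ e x x * (e x)⁻¹)
    (hf3 : ∀ x, (fderiv ℝ f x x * (f x)⁻¹)ᵀ = fderiv ℝ f x x * (f x)⁻¹) : f = e := by
  have hed : Differentiable ℝ e := he.differentiable (by simp)
  have hfd : Differentiable ℝ f := hf.differentiable (by simp)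
  have hid : Differentiable ℝ (fun y => (e y)⁻¹) := (contDiff_inv he hue).differentiable (by simp)
  set R : (Fin n → ℝ) → Matrix (Fin n) (Fin n) ℝ := fun y => f y * (e y)⁻¹ with hR
  have hRd : Differentiable ℝ R := hfd.mul hid
  have e1 : ∀ x, e x * (e x)⁻¹ = 1 := fun x =>
    Matrix.mul_nonsing_inv _ ((Matrix.isUnit_iff_isUnit_det _).1 (hue x))
  have e2 : ∀ x, (e x)⁻¹ * e x = 1 := fun x =>
    Matrix.nonsing_inv_mul _ ((Matrix.isUnit_iff_isUnit_det _).1 (hue x))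
  have f1 : ∀ x, f x * (f x)⁻¹ = 1 := fun x =>
    Matrix.mul_nonsing_inv _ ((Matrix.isUnit_iff_isUnit_det _).1 (huf x))
  have f2 : ∀ x, (f x)⁻¹ * f x = 1 := fun x =>
    Matrix.nonsing_inv_mul _ ((Matrix.isUnit_iff_isUnit_det _).1 (huf x))
  have hRe : ∀ x, R x * e x = f x := fun x => by
    simp only [hR]; rw [mul_assoc, e2, mul_one]
  have hRR : ∀ x, (R x)ᵀ * R x = 1 := by
    intro x
    simp only [hR, Matrix.transpose_mul]
    calc ((e x)⁻¹)ᵀ * (f x)ᵀ * (f x * (e x)⁻¹) = ((e x)⁻¹)ᵀ * ((f x)ᵀ * f x) * (e x)⁻¹ := by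
          noncomm_ring
      _ = ((e x)⁻¹)ᵀ * (e x)ᵀ * (e x * (e x)⁻¹) := by rw [← hg]; noncomm_ring
      _ = 1 := by rw [← Matrix.transpose_mul, e1]; simp
  have hRR' : ∀ x, R x * (R x)ᵀ = 1 := fun x => mul_eq_one_comm.1 (hRR x)
  have hz : ∀ x, fderiv ℝ R x x = 0 := by
    intro x
    have d1 := fderiv_mulM hRd hed x
    rw [show (fun y => R y * e y) = f from funext hRe] at d1
    have d2 := fderiv_mulM (differentiable_transp hRd) hRd x
    rw [show (fun y => (R y)ᵀ * R y) = fun _ => 1 from funext hRR,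
      hasFDerivAt_transp hRd] at d2
    simp only [fderiv_fun_const, Pi.zero_apply, _root_.zero_apply] at d2
    set N := (R x)ᵀ * fderiv ℝ R x x with hN
    have n1 : Nᵀ = -N := by
      rw [hN, Matrix.transpose_mul, Matrix.transpose_transpose, ← hN]
      exact eq_neg_of_add_eq_zero_right d2.symm
    have n2 : N = (R x)ᵀ * (fderiv ℝ f x x * (f x)⁻¹) * R x - fderiv ℝ e x x * (e x)⁻¹ := by
      have h1 : (f x)⁻¹ * R x = (e x)⁻¹ := by
        simp only [hR]; rw [← mul_assoc, f2, one_mul]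
      rw [d1]
      calc N = (R x)ᵀ * fderiv ℝ R x x * (e x * (e x)⁻¹) +
              ((R x)ᵀ * R x) * (fderiv ℝ e x x * (e x)⁻¹) - fderiv ℝ e x x * (e x)⁻¹ := by
            rw [e1, hRR, hN]; noncomm_ring
        _ = (R x)ᵀ * ((R x * fderiv ℝ e x x + fderiv ℝ R x x * e x)) * (e x)⁻¹
            - fderiv ℝ e x x * (e x)⁻¹ := by noncomm_ring
        _ = _ := by rw [← h1]; noncomm_ring
    have n3 : Nᵀ = N := by
      clear_value R
      rw [n2, Matrix.transpose_sub, Matrix.transpose_mul, Matrix.transpose_mul, he3, hf3,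
        Matrix.transpose_transpose]
      noncomm_ring
    have n4 : N = 0 := by
      rw [n3] at n1
      ext a b
      have h5 := congrFun (congrFun n1 a) b
      rw [Matrix.neg_apply] at h5
      rw [Matrix.zero_apply]
      linarith
    calc fderiv ℝ R x x = R x * (R x)ᵀ * fderiv ℝ R x x := by rw [hRR', one_mul]
      _ = R x * N := by rw [hN, mul_assoc]
      _ = 0 := by rw [n4, mul_zero]
  funext x
  have h1 := radial_const hRd hz x
  rw [← hRe x, h1]
  simp [hR, h0, h0']

open Matrix in
theorem exists_core {g : (Fin n → ℝ) → Matrix (Fin n) (Fin n) ℝ}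
    (hg : ContDiff ℝ (⊤ : ℕ∞) g) (hs : ∀ x, (g x)ᵀ = g x) (hu : ∀ x, IsUnit (g x))
    (h0 : g 0 = 1) :
    ∃ e : (Fin n → ℝ) → Matrix (Fin n) (Fin n) ℝ, ContDiff ℝ (⊤ : ℕ∞) e ∧ e 0 = 1 ∧
      (∀ x, fderiv ℝ e x x = e x * ((1/2 : ℝ) • ((g x)⁻¹ * fderiv ℝ g x x))) ∧
      (∀ x, IsUnit (e x)) ∧ (∀ x, g x = (e x)ᵀ * e x) ∧
      (∀ x, (fderiv ℝ e x x * (e x)⁻¹)ᵀ = fderiv ℝ e x x * (e x)⁻¹) := by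
  have hi := contDiff_inv hg hu
  have hgd : Differentiable ℝ g := hg.differentiable (by simp)
  have hid : Differentiable ℝ (fun y => (g y)⁻¹) := hi.differentiable (by simp)
  obtain ⟨e, he, he0, hE⟩ := exists_radial_solution_half g _ hg hi
  have hE' : ∀ x, fderiv ℝ e x x = e x * ((1/2 : ℝ) • ((g x)⁻¹ * fderiv ℝ g x x)) := hE
  have hed : Differentiable ℝ e := he.differentiable (by simp)
  have g1 : ∀ x, g x * (g x)⁻¹ = 1 := fun x =>
    Matrix.mul_nonsing_inv _ ((Matrix.isUnit_iff_isUnit_det _).1 (hu x))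
  have g2 : ∀ x, (g x)⁻¹ * g x = 1 := fun x =>
    Matrix.nonsing_inv_mul _ ((Matrix.isUnit_iff_isUnit_det _).1 (hu x))
  have gis : ∀ x, ((g x)⁻¹)ᵀ = (g x)⁻¹ := fun x => by
    rw [Matrix.transpose_nonsing_inv, hs]
  have gds : ∀ x, (fderiv ℝ g x x)ᵀ = fderiv ℝ g x x := fun x => by
    rw [← hasFDerivAt_transp hgd]; simp only [hs]
  have hKd : Differentiable ℝ (fun y => e y * (g y)⁻¹ * (e y)ᵀ) :=
    (hed.mul hid).mul (differentiable_transp hed)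
  have hK0 : ∀ x, fderiv ℝ (fun y => e y * (g y)⁻¹ * (e y)ᵀ) x x = 0 := by
    intro x
    rw [fderiv_mulM (f := fun y => e y * (g y)⁻¹) (hed.mul hid) (differentiable_transp hed), hasFDerivAt_transp hed,
      fderiv_mulM hed hid, hE']
    have d1 := fderiv_mulM hgd hid x
    rw [show (fun y => g y * (g y)⁻¹) = fun _ => 1 from funext g1] at d1
    simp only [fderiv_fun_const, Pi.zero_apply, _root_.zero_apply] at d1
    set G' := fderiv ℝ g x x
    set I' := fderiv ℝ (fun y => (g y)⁻¹) x x
    have d2 : I' = -((g x)⁻¹ * G' * (g x)⁻¹) := by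
      calc I' = (g x)⁻¹ * (g x * I' + G' * (g x)⁻¹) - (g x)⁻¹ * G' * (g x)⁻¹ := by
            rw [mul_add, ← mul_assoc, g2]; noncomm_ring
        _ = _ := by rw [← d1]; simp
    rw [d2, Matrix.transpose_mul, Matrix.transpose_smul, Matrix.transpose_mul, gis, gds]
    simp only [smul_mul_assoc, mul_smul_comm, mul_assoc, add_mul, mul_neg, neg_mul]
    module
  have hK : ∀ x, e x * (g x)⁻¹ * (e x)ᵀ = 1 := by
    intro x
    have := radial_const hKd hK0 x
    rw [this, he0, h0]; simp
  have hue : ∀ x, IsUnit (e x) := fun x =>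
    IsUnit.of_mul_eq_one ((g x)⁻¹ * (e x)ᵀ) (by rw [← mul_assoc]; exact hK x)
  have hge : ∀ x, g x = (e x)ᵀ * e x := by
    intro x
    have h1 : (g x)⁻¹ * (e x)ᵀ * e x = 1 := mul_eq_one_comm.1 (by rw [← mul_assoc]; exact hK x)
    calc g x = g x * ((g x)⁻¹ * (e x)ᵀ * e x) := by rw [h1, mul_one]
      _ = (g x * (g x)⁻¹) * ((e x)ᵀ * e x) := by noncomm_ring
      _ = _ := by rw [g1, one_mul]
  refine ⟨e, he, he0, hE', hue, hge, fun x => ?_⟩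
  have h1 : (e x)⁻¹ = (g x)⁻¹ * (e x)ᵀ :=
    Matrix.inv_eq_right_inv (by rw [← mul_assoc]; exact hK x)
  rw [hE', h1]
  simp only [Matrix.transpose_mul, Matrix.transpose_smul, gis, gds, Matrix.transpose_transpose,
    smul_mul_assoc, mul_smul_comm, mul_assoc]

open Matrix in
/-- A matrix function acting trivially on radial vectors is the identity at the origin. -/
theorem zero_eq_one {f : (Fin n → ℝ) → Matrix (Fin n) (Fin n) ℝ} (hf : Continuous f)
    (h : ∀ x, f x *ᵥ x = x) : f 0 = 1 ∧ ∀ x (t : ℝ), f (t • x) *ᵥ x = x := by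
  have hne : ∀ x (t : ℝ), t ≠ 0 → f (t • x) *ᵥ x = x := by
    intro x t ht
    have h1 := h (t • x)
    rw [Matrix.mulVec_smul] at h1
    exact smul_right_injective _ ht h1
  have hz : ∀ x, f 0 *ᵥ x = x := by
    intro x
    funext a
    have hc : Continuous (fun t : ℝ => (f (t • x) *ᵥ x) a) := by
      simp only [Matrix.mulVec, dotProduct]
      refine continuous_finsetSum _ fun b _ => Continuous.mul ?_ continuous_const
      exact (entryL a b).continuous.comp (hf.comp (continuous_id.smul continuous_const))
    have h1 : (fun t : ℝ => (f (t • x) *ᵥ x) a) = fun _ => x a := by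
      refine Continuous.ext_on (dense_compl_singleton (0:ℝ)) hc continuous_const fun t ht => ?_
      exact congrFun (hne x t ht) a
    simpa using congrFun h1 0
  refine ⟨?_, fun x t => ?_⟩
  · apply Matrix.toLin'.injective
    apply LinearMap.ext
    intro x
    simp [hz]
  · by_cases ht : t = 0
    · rw [ht, zero_smul, hz]
    · exact hne x t ht

open Matrix in
theorem one_core {g e : (Fin n → ℝ) → Matrix (Fin n) (Fin n) ℝ}
    (hg : ContDiff ℝ (⊤ : ℕ∞) g) (he : ContDiff ℝ (⊤ : ℕ∞) e) (he0 : e 0 = 1)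
    (hn : ∀ x, g x *ᵥ x = x)
    (hE : ∀ x, fderiv ℝ e x x = e x * ((1/2 : ℝ) • ((g x)⁻¹ * fderiv ℝ g x x))) (x : Fin n → ℝ) :
    e x *ᵥ x = x := by
  have hgd : Differentiable ℝ g := hg.differentiable (by simp)
  have hed : Differentiable ℝ e := he.differentiable (by simp)
  have hder : ∀ (f : (Fin n → ℝ) → Matrix (Fin n) (Fin n) ℝ), Differentiable ℝ f → ∀ a (t : ℝ),
      HasDerivAt (fun s : ℝ => (f (s • x) *ᵥ x) a) ((fderiv ℝ f (t • x) x *ᵥ x) a) t := by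
    intro f hf a t
    simp only [Matrix.mulVec, dotProduct]
    refine HasDerivAt.fun_sum fun b _ => HasDerivAt.mul_const ?_ _
    exact (entryL a b).hasFDerivAt.comp_hasDerivAt t (hasDerivAt_ray hf x t)
  have hgz : ∀ t : ℝ, fderiv ℝ g (t • x) x *ᵥ x = 0 := by
    intro t
    funext a
    have h1 := hder g hgd a t
    simp only [(zero_eq_one hg.continuous hn).2 x] at h1
    exact h1.unique (hasDerivAt_const t (x a))
  funext a
  have h2 := ray_const (fun s : ℝ => (e (s • x) *ᵥ x) a)
    (fun t => (hder e hed a t).differentiableAt) ?_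
  · simpa [he0] using h2
  · intro t ht
    rw [(hder e hed a t).deriv]
    have h3 := hE (t • x)
    rw [map_smul, map_smul, mul_smul_comm, mul_smul_comm, mul_smul_comm, smul_comm] at h3
    have h4 := smul_right_injective _ ht.ne' h3
    rw [h4, Matrix.smul_mulVec, ← Matrix.mulVec_mulVec, ← Matrix.mulVec_mulVec, hgz]
    simp

end VielbeinMatrix

section VielbeinMain

attribute [local instance] Matrix.linftyOpNormedRing Matrix.linftyOpNormedAlgebra

/-- Theorem 3: for every smooth symmetric positive-definite metric `g` on
`ℝⁿ` in normal coordinates (`∑_μ x^μ g_{μν}(x) = x^ν`), there exists exactly one smooth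
pointwise-invertible vielbein `e` satisfying (one) `∑_μ x^μ e^a_μ = x^a`,
(two) `∑_a x^a e^a_μ = x^μ`, (three) `∑_μ e_a^μ(∑_ν x^ν ∂_ν e^b_μ + e^b_μ)` symmetric
under `a ↔ b` (inverse matrix entries `e_a^μ(x) = (e x)⁻¹ μ a`), and
`g_{μν} = ∑_a e^a_μ e^a_ν`. Here `g x μ ν = g_{μν}(x)` and `e x a μ = e^a_μ(x)`. -/
theorem existsUnique_vielbein_of_normal_coordinates_metric
    {n : ℕ} (hn : 1 ≤ n)
    (g : (Fin n → ℝ) → Matrix (Fin n) (Fin n) ℝ)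
    (hgsmooth : ∀ μ ν, ContDiff ℝ (⊤ : ℕ∞) fun x => g x μ ν)
    (hgsymm : ∀ (x : Fin n → ℝ) μ ν, g x μ ν = g x ν μ)
    (hgpos : ∀ x : Fin n → ℝ, (g x).PosDef)
    (hnormal : ∀ (x : Fin n → ℝ) ν, ∑ μ, x μ * g x μ ν = x ν) :
    ∃! e : (Fin n → ℝ) → Matrix (Fin n) (Fin n) ℝ,
      (∀ a μ, ContDiff ℝ (⊤ : ℕ∞) fun x => e x a μ)
      ∧ (∀ x : Fin n → ℝ, IsUnit (e x))
      ∧ (∀ (x : Fin n → ℝ) a, ∑ μ, x μ * e x a μ = x a)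
      ∧ (∀ (x : Fin n → ℝ) μ, ∑ a, x a * e x a μ = x μ)
      ∧ (∀ (x : Fin n → ℝ) a b,
        ∑ μ, (e x)⁻¹ μ a * ((∑ ν, x ν * pd ν (fun y => e y b μ) x) + e x b μ)
          = ∑ μ, (e x)⁻¹ μ b * ((∑ ν, x ν * pd ν (fun y => e y a μ) x) + e x a μ))
      ∧ (∀ (x : Fin n → ℝ) μ ν, g x μ ν = ∑ a, e x a μ * e x a ν) := by
  classical
  have hg : ContDiff ℝ (⊤ : ℕ∞) g := contDiff_of_entries g hgsmooth
  have hs : ∀ x, (g x).transpose = g x := fun x => by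
    ext a b; exact hgsymm x b a
  have hu : ∀ x, IsUnit (g x) := fun x => (hgpos x).isUnit
  have hnv : ∀ x, (g x).mulVec x = x := by
    intro x
    funext a
    rw [← hnormal x a]
    simp only [Matrix.mulVec, dotProduct]
    exact Finset.sum_congr rfl fun b _ => by rw [hgsymm x a b, mul_comm]
  have hone : ∀ (e : (Fin n → ℝ) → Matrix (Fin n) (Fin n) ℝ) (x : Fin n → ℝ),
      (∀ a, ∑ μ, x μ * e x a μ = x a) ↔ (e x).mulVec x = x := by
    intro e x
    rw [funext_iff]
    simp only [Matrix.mulVec, dotProduct]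
    exact forall_congr' fun a => by simp only [mul_comm]
  have hgee : ∀ (e : (Fin n → ℝ) → Matrix (Fin n) (Fin n) ℝ) (x : Fin n → ℝ),
      (∀ μ ν, g x μ ν = ∑ a, e x a μ * e x a ν) ↔ g x = (e x).transpose * e x := by
    intro e x
    rw [← Matrix.ext_iff]
    rfl
  obtain ⟨e, he, he0, hE, hue, hge, h3⟩ := exists_core hg hs hu (zero_eq_one hg.continuous hnv).1
  have hed : Differentiable ℝ e := he.differentiable (by simp)
  have hev := one_core hg he he0 hnv hE
  refine ⟨e, ⟨fun a μ => ?_, hue, fun x => (hone e x).2 (hev x), fun x μ => ?_,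
    fun x => (three_iff hed hue x).2 (h3 x), fun x => (hgee e x).2 (hge x)⟩, ?_⟩
  · exact contDiff_clm_comp (entryL a μ) he
  · have h1 : (e x).transpose.mulVec x = x := by
      have h2 : (e x).transpose.mulVec ((e x).mulVec x) = x := by
        rw [Matrix.mulVec_mulVec, ← hge x, hnv]
      rwa [hev x] at h2
    conv_rhs => rw [← h1]
    simp only [Matrix.mulVec, dotProduct, Matrix.transpose_apply]
    exact Finset.sum_congr rfl fun b _ => mul_comm _ _
  · rintro f ⟨f1, f2, f3, f4, f5, f6⟩
    have hf := contDiff_of_entries f f1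
    have hfd : Differentiable ℝ f := hf.differentiable (by simp)
    refine unique_core he hf hue f2 he0
      (zero_eq_one hf.continuous fun x => (hone f x).1 (f3 x)).1 (fun x => ?_) h3
      (fun x => (three_iff hfd f2 x).1 (f5 x))
    rw [← hge x, (hgee f x).1 (f6 x)]

end VielbeinMain
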